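/- arXiv:2008.09733 — 2 statements merged into one kernel-verified Lean document; each statement's English description precedes it below -/
import Mathlib

section
/- For every list w = (w_1, …, w_m) with entries in [0,1], all a, b ∈ [0,1], and every list l with entries in [0,1], the effect of swapping two adjacent attractiveness values is given exactly by R_{g,q}(w ++ (a, b) ++ l) − R_{g,q}(w ++ (b, a) ++ l) = (∏_{j=1}^m ((g−q)·w_j + q)) · (a − b) · (1 − q). In particular the contribution of the suffix l cancels, and swapping two adjacent items so that the larger attractiveness comes first never decreases the expected reward. -/
/-- Expected reward `R_{g,q}` of a list of attractiveness values. -/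
def reward (g q : ℝ) : List ℝ → ℝ
  | [] => 0
  | z :: rest => z + ((g - q) * z + q) * reward g q rest

theorem reward_append (g q : ℝ) (w l : List ℝ) :
    reward g q (w ++ l) =
      reward g q w + (w.map (fun x => (g - q) * x + q)).prod * reward g q l := by
  induction w with
  | nil => simp only [List.nil_append, reward, List.map_nil, List.prod_nil, zero_add, one_mul]
  | cons x w ih =>
    simp only [List.cons_append, reward, List.map_cons, List.prod_cons, ih]
    ring

/-- Both the coefficient of `reward g q l` and the cross term `(g - q) * a * b` are symmetric in
`a` and `b`, so only `(a + q * b) - (b + q * a)` survives. -/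
theorem reward_cons_cons_sub_swap (g q a b : ℝ) (l : List ℝ) :
    reward g q (a :: b :: l) - reward g q (b :: a :: l) = (a - b) * (1 - q) := by
  simp only [reward]
  ring

theorem adjacent_swap_general (g q : ℝ) (w l : List ℝ) (a b : ℝ) :
    reward g q (w ++ a :: b :: l) - reward g q (w ++ b :: a :: l) =
      (w.map (fun x => (g - q) * x + q)).prod * (a - b) * (1 - q) ∧
    (q ≤ 1 → (∀ x ∈ w, 0 ≤ (g - q) * x + q) → b ≤ a →
      reward g q (w ++ b :: a :: l) ≤ reward g q (w ++ a :: b :: l)) := by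
  have swap_effect : reward g q (w ++ a :: b :: l) - reward g q (w ++ b :: a :: l) =
      (w.map (fun x => (g - q) * x + q)).prod * (a - b) * (1 - q) := by
    rw [reward_append, reward_append, add_sub_add_left_eq_sub, ← mul_sub,
      reward_cons_cons_sub_swap, mul_assoc]
  refine ⟨swap_effect, fun hq hw hba => ?_⟩
  have prod_nonneg : 0 ≤ (w.map (fun x => (g - q) * x + q)).prod :=
    List.prod_nonneg (List.forall_mem_map.2 hw)
  rw [← sub_nonneg, swap_effect]
  exact mul_nonneg (mul_nonneg prod_nonneg (sub_nonneg.2 hba)) (sub_nonneg.2 hq)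

/-- Exact effect of swapping two adjacent attractiveness values: the contribution of the
suffix `l` cancels, and swapping two adjacent items so that the larger attractiveness
comes first never decreases the expected reward. -/
theorem adjacent_swap (g q : ℝ) (hq0 : 0 ≤ q) (hqg : q ≤ g) (hg1 : g ≤ 1)
    (w l : List ℝ) (hw : ∀ x ∈ w, x ∈ Set.Icc (0 : ℝ) 1)
    (hl : ∀ x ∈ l, x ∈ Set.Icc (0 : ℝ) 1)
    (a b : ℝ) (ha : a ∈ Set.Icc (0 : ℝ) 1) (hb : b ∈ Set.Icc (0 : ℝ) 1) :
    reward g q (w ++ a :: b :: l) - reward g q (w ++ b :: a :: l) =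
      (w.map (fun x => (g - q) * x + q)).prod * (a - b) * (1 - q) ∧
    (b ≤ a → reward g q (w ++ b :: a :: l) ≤ reward g q (w ++ a :: b :: l)) := by
  obtain ⟨swap_effect, swap_le⟩ := adjacent_swap_general g q w l a b
  exact ⟨swap_effect, swap_le (hqg.trans hg1) fun x hx =>
    add_nonneg (mul_nonneg (sub_nonneg.2 hqg) (hw x hx).1) hq0⟩
end

section
/- (Lemma 2) Fix an ordering S of the N items and fix the discount function f. If u, u' ∈ [0,1]^N satisfy u_i ≤ u'_i for every item i, then the expected reward of S computed with relevances u' is at least the expected reward of S computed with relevances u: E[R(S, u')] ≥ E[R(S, u)]. -/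
/-- Auxiliary: attractiveness values of the items in `S`, given that the
items in `prev` have already been shown. -/
def attrAux {N K : ℕ} (f : ℕ → ℝ) (u : Fin N → ℝ) (C : Fin N → Fin K) :
    List (Fin N) → List (Fin N) → List ℝ
  | _, [] => []
  | prev, i :: rest =>
      f (prev.countP (fun j => decide (C j = C i))) * u i ::
        attrAux f u C (prev ++ [i]) rest

/-- The list of attractiveness values `z_{S_1}(S), …, z_{S_N}(S)` of an ordering `S`. -/
def attrList {N K : ℕ} (f : ℕ → ℝ) (u : Fin N → ℝ) (C : Fin N → Fin K)
    (S : List (Fin N)) : List ℝ :=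
  attrAux f u C [] S

/-!
At each position the reward is the attractiveness of the item plus a continuation factor times the
reward of the tail. When `0 ≤ q ≤ g` that factor is nonnegative and nondecreasing in the
attractiveness, and the tail reward is nonnegative, so the reward increases with the attractiveness
values. These are in turn monotone in `u`, because the discount factors depend on the ordering but
not on `u`.
-/

section Reward

variable {g q : ℝ}

/-- The factor by which an item of attractiveness `z` weights the reward of the items after it.
It equals `g * z + q * (1 - z)`, the probability of continuing if a user who selects the item
continues with probability `g` and one who does not with probability `q`. It is written in the
shape in which it occurs in `reward`. -/
def continuationFactor (g q z : ℝ) : ℝ :=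
  (g - q) * z + q

theorem continuationFactor_nonneg (hq : 0 ≤ q) (hqg : q ≤ g) {z : ℝ} (hz : 0 ≤ z) :
    0 ≤ continuationFactor g q z :=
  add_nonneg (mul_nonneg (sub_nonneg.2 hqg) hz) hq

theorem continuationFactor_monotone (hqg : q ≤ g) : Monotone (continuationFactor g q) :=
  (monotone_id.const_mul (sub_nonneg.2 hqg)).add_const q

theorem reward_cons (g q z : ℝ) (l : List ℝ) :
    reward g q (z :: l) = z + continuationFactor g q z * reward g q l :=
  rfl

theorem reward_nonneg (hq : 0 ≤ q) (hqg : q ≤ g) {l : List ℝ} (hl : ∀ z ∈ l, 0 ≤ z) :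
    0 ≤ reward g q l := by
  induction l with
  | nil => exact le_rfl
  | cons z l ih =>
    obtain ⟨hz, hl⟩ := List.forall_mem_cons.1 hl
    rw [reward_cons]
    exact add_nonneg hz (mul_nonneg (continuationFactor_nonneg hq hqg hz) (ih hl))

theorem reward_le_reward_of_forall₂ (hq : 0 ≤ q) (hqg : q ≤ g) {l l' : List ℝ}
    (hl : ∀ z ∈ l, 0 ≤ z) (hll' : List.Forall₂ (· ≤ ·) l l') :
    reward g q l ≤ reward g q l' := by
  induction hll' with
  | nil => exact le_rfl
  | @cons z z' l l' hzz' _ ih =>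
    obtain ⟨hz, hl⟩ := List.forall_mem_cons.1 hl
    have hcont : continuationFactor g q z ≤ continuationFactor g q z' :=
      continuationFactor_monotone hqg hzz'
    have hcont_nonneg : 0 ≤ continuationFactor g q z' :=
      continuationFactor_nonneg hq hqg (hz.trans hzz')
    rw [reward_cons, reward_cons]
    exact add_le_add hzz' (mul_le_mul hcont (ih hl) (reward_nonneg hq hqg hl) hcont_nonneg)

end Reward

section Attractiveness

variable {N K : ℕ} {f : ℕ → ℝ} {u u' : Fin N → ℝ}

theorem attrAux_nonneg (hf : 0 ≤ f) (hu : 0 ≤ u) (C : Fin N → Fin K) (prev S : List (Fin N)) :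
    ∀ z ∈ attrAux f u C prev S, 0 ≤ z := by
  induction S generalizing prev with
  | nil => exact List.forall_mem_nil _
  | cons i S ih => exact List.forall_mem_cons.2 ⟨mul_nonneg (hf _) (hu i), ih (prev ++ [i])⟩

theorem forall₂_attrAux_le (hf : 0 ≤ f) (huu' : u ≤ u') (C : Fin N → Fin K)
    (prev S : List (Fin N)) :
    List.Forall₂ (· ≤ ·) (attrAux f u C prev S) (attrAux f u' C prev S) := by
  induction S generalizing prev with
  | nil => exact .nil
  | cons i S ih => exact .cons (mul_le_mul_of_nonneg_left (huu' i) (hf _)) (ih (prev ++ [i]))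

end Attractiveness

theorem reward_mono_in_u_general {N K : ℕ} {g q : ℝ} (hq : 0 ≤ q) (hqg : q ≤ g) {f : ℕ → ℝ}
    (hf : 0 ≤ f) (C : Fin N → Fin K) {u u' : Fin N → ℝ} (hu : 0 ≤ u) (huu' : u ≤ u')
    (S : List (Fin N)) :
    reward g q (attrList f u C S) ≤ reward g q (attrList f u' C S) :=
  reward_le_reward_of_forall₂ hq hqg (attrAux_nonneg hf hu C [] S)
    (forall₂_attrAux_le hf huu' C [] S)

/-- Lemma 2: for a fixed ordering `S` and discount function `f`, the expected reward is
monotone nondecreasing in the vector of intrinsic relevances. -/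
theorem reward_mono_in_u {N K : ℕ} (g q : ℝ) (hq0 : 0 ≤ q) (hqg : q ≤ g) (hg1 : g ≤ 1)
    (f : ℕ → ℝ) (hf_anti : Antitone f) (hf0 : f 0 = 1)
    (hf_mem : ∀ r, f r ∈ Set.Icc (0 : ℝ) 1)
    (C : Fin N → Fin K)
    (u u' : Fin N → ℝ) (hu : ∀ i, 0 ≤ u i) (hu' : ∀ i, u' i ≤ 1)
    (huu' : ∀ i, u i ≤ u' i)
    (S : List (Fin N)) (hS : S.Perm (List.finRange N)) :
    reward g q (attrList f u C S) ≤ reward g q (attrList f u' C S) :=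
  reward_mono_in_u_general hq0 hqg (fun r => (hf_mem r).1) C hu huu' S
end
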